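/- For all integers n ≥ 0, R̄_{4,3}(2n) = pp̄_o(n); that is, the number of (4,3)-regular overpartitions of 2n equals the number of overpartition pairs of n into odd parts. -/

import Mathlib

/-- Number of partitions of `a` with no part divisible by `ℓ` or `μ`
(the non-overlined parts of an `(ℓ,μ)`-regular overpartition). -/
def regularCount (ℓ μ a : ℕ) : ℕ :=
  Fintype.card {p : a.Partition // ∀ i ∈ p.parts, ¬ ℓ ∣ i ∧ ¬ μ ∣ i}

/-- Number of partitions of `a` into distinct parts with no part divisible by `ℓ` or `μ`
(the overlined parts of an `(ℓ,μ)`-regular overpartition). -/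
def regularDistinctCount (ℓ μ a : ℕ) : ℕ :=
  Fintype.card {p : a.Partition // p.parts.Nodup ∧ ∀ i ∈ p.parts, ¬ ℓ ∣ i ∧ ¬ μ ∣ i}

/-- `Rbar ℓ μ n` is the number of `(ℓ,μ)`-regular overpartitions of `n`: pairs `(λ, δ)`
where `λ` is a partition, `δ` is a partition into distinct parts, `|λ| + |δ| = n`,
and no part of `λ` or `δ` is divisible by `ℓ` or by `μ`. -/
def Rbar (ℓ μ n : ℕ) : ℕ :=
  ∑ ab ∈ Finset.HasAntidiagonal.antidiagonal n, regularCount ℓ μ ab.1 * regularDistinctCount ℓ μ ab.2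

/-- Number of partitions of `a` into odd parts. -/
def oddCount (a : ℕ) : ℕ :=
  Fintype.card {p : a.Partition // ∀ i ∈ p.parts, Odd i}

/-- Number of partitions of `a` into distinct odd parts. -/
def oddDistinctCount (a : ℕ) : ℕ :=
  Fintype.card {p : a.Partition // p.parts.Nodup ∧ ∀ i ∈ p.parts, Odd i}

/-- Number of overpartitions of `a` into odd parts: pairs `(λ, δ)` with `λ` a partition
into odd parts, `δ` a partition into distinct odd parts, and `|λ| + |δ| = a`. -/
def overOdd (a : ℕ) : ℕ :=
  ∑ ab ∈ Finset.HasAntidiagonal.antidiagonal a, oddCount ab.1 * oddDistinctCount ab.2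

/-- `ppo n` is the number of overpartition pairs of `n` into odd parts: quadruples
`(λ₁, δ₁, λ₂, δ₂)` where `λ₁, λ₂` are partitions into odd parts, `δ₁, δ₂` are partitions
into distinct odd parts, and `|λ₁| + |δ₁| + |λ₂| + |δ₂| = n`. -/
def ppo (n : ℕ) : ℕ :=
  ∑ ab ∈ Finset.HasAntidiagonal.antidiagonal n, overOdd ab.1 * overOdd ab.2

/-!
By Gauss's identity, the generating function of the overpartitions into multiples of `k` is
`1 / φ(-q ^ k)`, where `φ(q) = ∑ n : ℤ, q ^ n ^ 2`. Inclusion-exclusion then gives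
`∑ n, Rbar 4 3 n * q ^ n = φ(-q ^ 4) φ(-q ^ 3) / (φ(-q) φ(-q ^ 12))` and
`∑ n, overOdd n * q ^ n = φ(-q ^ 2) / φ(-q)`. Multiplying numerator and denominator of the former by
`φ(q)` and using `φ(q) φ(-q) = φ(-q ^ 2) ^ 2` makes the denominator even, so that only the even part
of `φ(q) φ(-q ^ 3)` is needed. That part is a sum over the hexagonal lattice with quadratic form
`m ^ 2 + m * n + n ^ 2` and sign `(-1) ^ m`; its terms with `n` odd cancel in pairs under
`(m, n) ↦ (-m - n, n)`, and the others sum to `φ(-q ^ 4) φ(-q ^ 12)`.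
-/

section FiniteGauss

open Finset

variable {R : Type*} [CommRing R] (q : R)

/-- The `s`-th term of the sum that expresses `∏ i < n, (1 + q ^ (i + 1))` times the `n`-th
truncation of `∑ j : ℤ, (-1) ^ j * q ^ j ^ 2` in a form where the term `s = 0` dominates
`q`-adically; see `prod_one_add_pow_mul_sum_eq_sum_shanksTerm`. -/
def shanksTerm (n s : ℕ) : R :=
  (-1) ^ s * (∏ i ∈ range s, (1 + q ^ i)) * (∏ i ∈ Ico s n, (1 - q ^ (i + 1))) * q ^ (s * (n + 1))

lemma shanksTerm_zero_right (n : ℕ) : shanksTerm q n 0 = ∏ i ∈ range n, (1 - q ^ (i + 1)) := by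
  simp [shanksTerm]

lemma pow_dvd_shanksTerm_succ (n s : ℕ) : q ^ (n + 1) ∣ shanksTerm q n (s + 1) :=
  dvd_mul_of_dvd_right (pow_dvd_pow q (Nat.le_mul_of_pos_left _ s.succ_pos)) _

lemma shanksTerm_self (n : ℕ) :
    shanksTerm q (n + 1) (n + 1) =
      2 * (-1) ^ (n + 1) * (∏ i ∈ range n, (1 + q ^ (i + 1))) * q ^ ((n + 1) * (n + 2)) := by
  rw [shanksTerm, prod_range_succ', Ico_self, prod_empty]
  ring

lemma sum_shanksTerm_succ_sub {n S : ℕ} (hS : S ≤ n) :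
    ∑ s ∈ range (S + 1), (shanksTerm q (n + 1) s - (1 + q ^ (n + 1)) * shanksTerm q n s) =
      -((-1) ^ S * (∏ i ∈ range (S + 1), (1 + q ^ i)) * (∏ i ∈ Ico S n, (1 - q ^ (i + 1))) *
        q ^ ((S + 1) * (n + 1))) := by
  induction S with
  | zero =>
    simp only [shanksTerm, zero_add, sum_range_one, prod_range_one, prod_range_zero,
      prod_Ico_succ_top (Nat.zero_le n)]
    ring
  | succ S ih =>
    rw [sum_range_succ, ih (by lia), prod_eq_prod_Ico_succ_bot (by lia : S < n), shanksTerm,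
      shanksTerm, prod_Ico_succ_top hS, prod_range_succ _ (S + 1)]
    ring

/-- A finite form of Gauss's identity for `∑ j : ℤ, (-1) ^ j * q ^ j ^ 2`, after Shanks. -/
theorem prod_one_add_pow_mul_sum_eq_sum_shanksTerm (n : ℕ) :
    (∏ i ∈ range n, (1 + q ^ (i + 1))) * (2 * ∑ j ∈ range (n + 1), (-1) ^ j * q ^ j ^ 2 - 1) =
      ∑ s ∈ range (n + 1), shanksTerm q n s := by
  induction n with
  | zero => simp [shanksTerm]; ring
  | succ n ih =>
    have hstep := sum_shanksTerm_succ_sub q (le_refl n)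
    rw [sum_sub_distrib, ← mul_sum, ← ih, Ico_self, prod_empty, prod_range_succ'] at hstep
    rw [sum_range_succ _ (n + 1), sum_range_succ (shanksTerm q (n + 1)), shanksTerm_self,
      sub_eq_iff_eq_add.mp hstep, prod_range_succ]
    ring

theorem pow_dvd_prod_one_add_pow_mul_sum_sub_prod_one_sub_pow (n : ℕ) :
    q ^ (n + 1) ∣
      (∏ i ∈ range n, (1 + q ^ (i + 1))) * (2 * ∑ j ∈ range (n + 1), (-1) ^ j * q ^ j ^ 2 - 1) -
        ∏ i ∈ range n, (1 - q ^ (i + 1)) := by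
  rw [prod_one_add_pow_mul_sum_eq_sum_shanksTerm, sum_range_succ', shanksTerm_zero_right,
    add_sub_cancel_right]
  exact dvd_sum fun s _ ↦ pow_dvd_shanksTerm_succ q n s

end FiniteGauss

section Contract

open Finset PowerSeries PowerSeries.WithPiTopology

/-- The power series whose `n`-th coefficient is the `p * n`-th coefficient of `f`; the analogue of
`Polynomial.contract`. -/
noncomputable def contract {R : Type*} [Semiring R] (p : ℕ) (f : R⟦X⟧) : R⟦X⟧ :=
  PowerSeries.mk fun n ↦ coeff (p * n) f

@[simp]
lemma coeff_contract {R : Type*} [Semiring R] (p n : ℕ) (f : R⟦X⟧) :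
    coeff n (contract p f) = coeff (p * n) f :=
  coeff_mk _ _

lemma contract_monomial_mul {R : Type*} [Semiring R] {p : ℕ} (hp : p ≠ 0) (d : ℕ) (r : R) :
    contract p (monomial (p * d) r) = monomial d r := by
  ext n
  simp [coeff_monomial, hp]

lemma contract_monomial_of_not_dvd {R : Type*} [Semiring R] {p d : ℕ} (h : ¬ p ∣ d) (r : R) :
    contract p (monomial d r) = 0 := by
  ext n
  rw [coeff_contract, coeff_monomial, map_zero, if_neg]
  rintro rfl
  exact h (dvd_mul_right p n)

lemma hasSum_contract {R : Type*} [Semiring R] [TopologicalSpace R] {ι : Type*} {f : ι → R⟦X⟧}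
    {a : R⟦X⟧} (p : ℕ) (h : HasSum f a) :
    HasSum (fun i ↦ contract p (f i)) (contract p a) := by
  rw [hasSum_iff_hasSum_coeff] at h ⊢
  intro n
  simpa using h (p * n)

theorem contract_mul_expand {R : Type*} [CommRing R] {p : ℕ} (hp : p ≠ 0) (f g : R⟦X⟧) :
    contract p (f * expand p hp g) = contract p f * g := by
  ext n
  have hinj : Function.Injective (Prod.map (p * ·) (p * ·) : ℕ × ℕ → ℕ × ℕ) :=
    (mul_right_injective₀ hp).prodMap (mul_right_injective₀ hp)
  rw [coeff_contract, coeff_mul, coeff_mul, ← sum_subset (s₁ := (antidiagonal n).map ⟨_, hinj⟩),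
    sum_map]
  · simp
  · intro x hx
    obtain ⟨y, hy, rfl⟩ := mem_map.mp hx
    simp [← mul_add, mem_antidiagonal.mp hy]
  · rintro ⟨i, j⟩ hij hnot
    rw [HasAntidiagonal.mem_antidiagonal] at hij
    refine mul_eq_zero_of_right _ (coeff_expand_of_not_dvd p hp g fun hj ↦ hnot ?_)
    obtain ⟨a, rfl⟩ := (Nat.dvd_add_iff_left hj).mpr (hij ▸ dvd_mul_right p n)
    obtain ⟨b, rfl⟩ := hj
    have hab : a + b = n := mul_left_cancel₀ hp (by rw [mul_add, hij])
    simp [hp, hab]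

lemma continuous_expand {R : Type*} [CommRing R] [TopologicalSpace R] {p : ℕ} (hp : p ≠ 0) :
    Continuous (expand p hp : R⟦X⟧ → R⟦X⟧) := by
  rw [continuous_iff_continuousAt]
  intro f
  rw [ContinuousAt, tendsto_iff_coeff_tendsto]
  intro d
  simp only [coeff_expand]
  split_ifs
  · exact (continuous_coeff R _).continuousAt
  · exact tendsto_const_nhds

end Contract

section Theta

open PowerSeries PowerSeries.WithPiTopology

instance {R : Type*} [Semiring R] [CharZero R] : CharZero R⟦X⟧ :=
  charZero_of_injective_ringHom C_injective

lemma summable_monomial {R : Type*} [Semiring R] [TopologicalSpace R] {ι : Type*} {e : ι → ℕ}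
    (he : ∀ d, (e ⁻¹' {d}).Finite) (c : ι → R) :
    Summable fun i ↦ (monomial (e i) (c i) : R⟦X⟧) := by
  rw [summable_iff_summable_coeff]
  intro d
  refine summable_of_hasFiniteSupport ((he d).subset fun i hi ↦ ?_)
  rw [Function.mem_support, coeff_monomial] at hi
  exact (of_not_not fun h ↦ hi (if_neg h)).symm

theorem hasSum_eq_of_neg_off_range {M ι κ : Type*} [AddCommGroup M] [IsAddTorsionFree M]
    [TopologicalSpace M] [ContinuousAdd M] [T2Space M] {f : ι → M} {g : κ → ι} {a b : M}
    (hg : Function.Injective g) (σ : Equiv.Perm ι) (hσ_range : ∀ k, f (σ (g k)) = f (g k))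
    (hσ : ∀ i ∉ Set.range g, f (σ i) = -f i) (ha : HasSum f a)
    (hb : HasSum (fun k ↦ f (g k)) b) : a = b := by
  have hsum : HasSum (fun i ↦ f i + f (σ i)) (a + a) := ha.add (σ.hasSum_iff.mpr ha)
  have hsum_range : HasSum (fun k ↦ f (g k) + f (σ (g k))) (a + a) :=
    (hg.hasSum_iff fun i hi ↦ by simp [hσ i hi]).mpr hsum
  simp only [hσ_range] at hsum_range
  have hdouble : 2 • a = 2 • b := by simpa only [two_nsmul] using hsum_range.unique (hb.add hb)
  exact nsmul_right_injective two_ne_zero hdouble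

/-- The theta series `∑ n : ℤ, ε ^ n * X ^ (k * n ^ 2)` with character `ε = ±1`: Ramanujan's
`φ(q ^ k)` for `ε = 1` and `φ(-q ^ k)` for `ε = -1`. Equal to `0` by convention if `k = 0`. -/
noncomputable def theta (ε : ℤˣ) (k : ℕ) : ℤ⟦X⟧ :=
  ∑' n : ℤ, monomial (k * n.natAbs ^ 2) ((ε ^ n : ℤˣ) : ℤ)

lemma finite_preimage_mul_natAbs_sq {k : ℕ} (hk : k ≠ 0) (d : ℕ) :
    ((fun n : ℤ ↦ k * n.natAbs ^ 2) ⁻¹' {d}).Finite := by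
  refine (Set.finite_Icc (-(d : ℤ)) d).subset fun n (hn : k * n.natAbs ^ 2 = d) ↦ ?_
  have : n.natAbs ≤ d := by
    rw [← hn]
    exact (Nat.le_self_pow two_ne_zero _).trans (Nat.le_mul_of_pos_left _ hk.pos)
  grind

lemma finite_preimage_add {ι κ : Type*} {e : ι → ℕ} {e' : κ → ℕ}
    (he : ∀ d, (e ⁻¹' {d}).Finite) (he' : ∀ d, (e' ⁻¹' {d}).Finite) (d : ℕ) :
    ((fun x : ι × κ ↦ e x.1 + e' x.2) ⁻¹' {d}).Finite := by
  refine (((Set.finite_Iic d).preimage' fun i _ ↦ he i).prod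
    ((Set.finite_Iic d).preimage' fun i _ ↦ he' i)).subset fun x (hx : e x.1 + e' x.2 = d) ↦ ?_
  exact ⟨hx ▸ Nat.le_add_right _ _, hx ▸ Nat.le_add_left _ _⟩

lemma hasSum_theta (ε : ℤˣ) {k : ℕ} (hk : k ≠ 0) :
    HasSum (fun n : ℤ ↦ (monomial (k * n.natAbs ^ 2) ((ε ^ n : ℤˣ) : ℤ) : ℤ⟦X⟧)) (theta ε k) :=
  (summable_monomial (finite_preimage_mul_natAbs_sq hk) _).hasSum

lemma hasSum_theta_mul_theta (ε δ : ℤˣ) {k l : ℕ} (hk : k ≠ 0) (hl : l ≠ 0) :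
    HasSum (fun x : ℤ × ℤ ↦ (monomial (k * x.1.natAbs ^ 2 + l * x.2.natAbs ^ 2)
      ((ε ^ x.1 * δ ^ x.2 : ℤˣ) : ℤ) : ℤ⟦X⟧)) (theta ε k * theta δ l) := by
  have hfin := finite_preimage_add (finite_preimage_mul_natAbs_sq hk)
    (finite_preimage_mul_natAbs_sq hl)
  have hmul := (hasSum_theta ε hk).mul (hasSum_theta δ hl) (by
    simpa only [monomial_mul_monomial] using summable_monomial hfin _)
  simpa only [monomial_mul_monomial, Units.val_mul] using hmul

theorem expand_theta (ε : ℤˣ) {k p : ℕ} (hk : k ≠ 0) (hp : p ≠ 0) :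
    expand p hp (theta ε k) = theta ε (p * k) := by
  refine ((hasSum_theta ε hk).map (expand p hp) (continuous_expand hp)).unique ?_
  convert! hasSum_theta ε (mul_ne_zero hp hk) using 2 with n
  simp [expand_monomial, mul_assoc]

lemma neg_one_zpow_eq_neg_of_odd_add {x y : ℤ} (h : Odd (x + y)) :
    (-1 : ℤˣ) ^ y = -(-1) ^ x := by
  simp only [← Int.negOnePow_def]
  rw [← neg_one_mul, ← Int.negOnePow_odd _ h, ← Int.negOnePow_add, Int.negOnePow_eq_iff]
  exact ⟨-x, by ring⟩

theorem theta_neg_one_mul_theta_one {k : ℕ} (hk : k ≠ 0) :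
    theta (-1) k * theta 1 k = theta (-1) (2 * k) ^ 2 := by
  let g : ℤ × ℤ → ℤ × ℤ := fun x ↦ (x.1 + x.2, x.1 - x.2)
  have hg : Function.Injective g := by
    rintro ⟨m, n⟩ ⟨m', n'⟩ h
    grind
  have hexp (m n : ℤ) : k * (m + n).natAbs ^ 2 + k * (m - n).natAbs ^ 2 =
      2 * k * m.natAbs ^ 2 + 2 * k * n.natAbs ^ 2 := by
    zify
    simp only [sq_abs]
    ring
  have hsign (m n : ℤ) : (-1 : ℤˣ) ^ (m - n) = (-1) ^ (m + n) :=
    (Int.negOnePow_eq_iff _ _).mpr ⟨-n, by ring⟩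
  have hodd {x y : ℤ} (h : (x, y) ∉ Set.range g) : Odd (x + y) := by
    rw [← Int.not_even_iff_odd]
    rintro ⟨r, hr⟩
    exact h ⟨(r, x - r), by grind⟩
  refine hasSum_eq_of_neg_off_range hg (Equiv.prodComm ℤ ℤ) ?_ ?_
    (hasSum_theta_mul_theta (-1) 1 hk hk) ?_
  · rintro ⟨m, n⟩
    simp [g, hsign, add_comm]
  · rintro ⟨x, y⟩ h
    simp [neg_one_zpow_eq_neg_of_odd_add (hodd h), add_comm]
  · rw [sq]
    convert! hasSum_theta_mul_theta (-1) (-1) (mul_ne_zero two_ne_zero hk)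
      (mul_ne_zero two_ne_zero hk) using 2 with x
    simp [g, hexp, zpow_add]

lemma hasSum_contract_two_theta_three_mul_theta_one :
    HasSum (fun x : ℤ × ℤ ↦ (monomial (2 * (x.1 ^ 2 + x.1 * x.2 + x.2 ^ 2).natAbs)
      (((-1) ^ x.1 : ℤˣ) : ℤ) : ℤ⟦X⟧)) (contract 2 (theta (-1) 3 * theta 1 1)) := by
  let g : ℤ × ℤ → ℤ × ℤ := fun x ↦ (x.1, x.1 + 2 * x.2)
  have hg : Function.Injective g := by
    rintro ⟨m, n⟩ ⟨m', n'⟩ h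
    grind
  have hexp (m n : ℤ) : 3 * m.natAbs ^ 2 + 1 * (m + 2 * n).natAbs ^ 2 =
      2 * (2 * (m ^ 2 + m * n + n ^ 2).natAbs) := by
    have hnonneg : 0 ≤ m ^ 2 + m * n + n ^ 2 := by
      nlinarith [sq_nonneg (m + n), sq_nonneg m, sq_nonneg n]
    zify
    rw [abs_of_nonneg hnonneg]
    simp only [sq_abs]
    ring
  have hodd {x y : ℤ} (h : (x, y) ∉ Set.range g) :
      ¬ 2 ∣ 3 * x.natAbs ^ 2 + 1 * y.natAbs ^ 2 := by
    intro hdvd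
    obtain ⟨r, hr⟩ : Even (y - x) := by
      simpa [← even_iff_two_dvd, Int.even_sub, Nat.even_add, Nat.even_mul, Nat.even_pow,
        show ¬ Even 3 by decide, iff_comm] using hdvd
    exact h ⟨(x, r), by grind⟩
  have hsum := hasSum_contract 2 (hasSum_theta_mul_theta (-1) 1 three_ne_zero one_ne_zero)
  rw [← hg.hasSum_iff] at hsum
  · convert! hsum using 2 with x
    simp only [g, Function.comp_apply, hexp, contract_monomial_mul two_ne_zero, one_zpow, mul_one]
  · rintro ⟨x, y⟩ h
    exact contract_monomial_of_not_dvd (hodd h) _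

theorem contract_two_theta_three_mul_theta_one :
    contract 2 (theta (-1) 3 * theta 1 1) = theta (-1) 6 * theta (-1) 2 := by
  let g : ℤ × ℤ → ℤ × ℤ := fun x ↦ (x.2 - x.1, 2 * x.1)
  have hg : Function.Injective g := by
    rintro ⟨m, n⟩ ⟨m', n'⟩ h
    grind
  let σ : Equiv.Perm (ℤ × ℤ) :=
    Function.Involutive.toPerm (fun x ↦ (-x.1 - x.2, x.2)) fun x ↦ by simp
  have hσ (x y : ℤ) : σ (x, y) = (-x - y, y) := rfl
  have hform (m n : ℤ) : (-m - n) ^ 2 + (-m - n) * n + n ^ 2 = m ^ 2 + m * n + n ^ 2 := by ring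
  have hsign (u v : ℤ) : (-1 : ℤˣ) ^ (-(v - u) - 2 * u) = (-1) ^ (v - u) :=
    (Int.negOnePow_eq_iff _ _).mpr ⟨-v, by ring⟩
  have hexp (u v : ℤ) : 2 * ((v - u) ^ 2 + (v - u) * (2 * u) + (2 * u) ^ 2).natAbs =
      6 * u.natAbs ^ 2 + 2 * v.natAbs ^ 2 := by
    rw [show (v - u) ^ 2 + (v - u) * (2 * u) + (2 * u) ^ 2 = 3 * u ^ 2 + v ^ 2 by ring]
    zify
    rw [abs_of_nonneg (by positivity)]
    simp only [sq_abs]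
    ring
  have hodd {x y : ℤ} (h : (x, y) ∉ Set.range g) : Odd (x + (-x - y)) := by
    rw [← Int.not_even_iff_odd]
    rintro ⟨r, hr⟩
    exact h ⟨(-r, x - r), by grind⟩
  refine hasSum_eq_of_neg_off_range hg σ ?_ ?_ hasSum_contract_two_theta_three_mul_theta_one ?_
  · rintro ⟨u, v⟩
    simp only [g, hσ, hform, hsign]
  · rintro ⟨x, y⟩ h
    simp [hσ, hform, neg_one_zpow_eq_neg_of_odd_add (hodd h)]
  · convert! hasSum_theta_mul_theta (-1) (-1) (by norm_num : 6 ≠ 0) two_ne_zero using 2 with x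
    simp [g, hexp, zpow_sub, mul_comm ((-1) ^ x.2 : ℤˣ)]

end Theta

section Overpartitions

open PowerSeries PowerSeries.WithPiTopology Filter Topology

/-- The generating function `∑ n, p(n) * X ^ n`, where `p(n)` is the number of overpartitions of `n`
all of whose parts, overlined or not, satisfy `P`. -/
noncomputable def overpartitionGenFun (P : ℕ → Prop) [DecidablePred P] : ℤ⟦X⟧ :=
  (PowerSeries.mk fun n ↦ (Fintype.card {p : n.Partition // ∀ i ∈ p.parts, P i} : ℤ)) *
    PowerSeries.mk fun n ↦
      (Fintype.card {p : n.Partition // p.parts.Nodup ∧ ∀ i ∈ p.parts, P i} : ℤ)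

/-- The generating function of the overpartitions all of whose parts are equal to `m`. -/
noncomputable def overpartitionFactor (m : ℕ) : ℤ⟦X⟧ :=
  (∑' j : ℕ, X ^ (m * j)) * (1 + X ^ m)

lemma hasProd_mk_card_partition (R : Type*) [CommSemiring R] [TopologicalSpace R] [T2Space R]
    [IsTopologicalSemiring R] (P : ℕ → Prop) [DecidablePred P] :
    HasProd (fun i ↦ if P (i + 1) then ∑' j : ℕ, X ^ ((i + 1) * j) else 1)
      (PowerSeries.mk fun n ↦ (Fintype.card {p : n.Partition // ∀ i ∈ p.parts, P i} : R)) := by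
  convert! Nat.Partition.hasProd_powerSeriesMk_card_restricted R P using 3 with n
  rw [Fintype.card_subtype]
  rfl

lemma hasProd_mk_card_nodup_partition (R : Type*) [CommSemiring R] [TopologicalSpace R] [T2Space R]
    (P : ℕ → Prop) [DecidablePred P] :
    HasProd (fun i ↦ if P (i + 1) then 1 + X ^ (i + 1) else 1)
      (PowerSeries.mk fun n ↦
        (Fintype.card {p : n.Partition // p.parts.Nodup ∧ ∀ i ∈ p.parts, P i} : R)) := by
  have hprod_weights {n : ℕ} (p : n.Partition) :
      p.parts.toFinsupp.prod (fun i c ↦ if P i ∧ c ≤ 1 then (1 : R) else 0) =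
        if p.parts.Nodup ∧ ∀ i ∈ p.parts, P i then 1 else 0 := by
    rw [Finsupp.prod, Finset.prod_boole]
    congr 1
    simp only [Multiset.toFinsupp_support, Multiset.mem_toFinset, Multiset.toFinsupp_apply,
      Multiset.nodup_iff_count_le_one, eq_iff_iff]
    have hcount (i : ℕ) (hi : i ∉ p.parts) : p.parts.count i ≤ 1 := by
      simp [Multiset.count_eq_zero_of_notMem hi]
    grind
  convert! Nat.Partition.hasProd_genFun (fun i c ↦ if P i ∧ c ≤ 1 then (1 : R) else 0) using 1
  · ext1 i
    rw [tsum_eq_single 0 fun j hj ↦ by simp [hj]]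
    by_cases hP : P (i + 1) <;> simp [hP]
  · ext n
    simp [hprod_weights, Fintype.card_subtype]

theorem hasProd_overpartitionGenFun (P : ℕ → Prop) [DecidablePred P] :
    HasProd (fun i ↦ if P (i + 1) then overpartitionFactor (i + 1) else 1)
      (overpartitionGenFun P) := by
  convert! (hasProd_mk_card_partition ℤ P).mul (hasProd_mk_card_nodup_partition ℤ P) using 2 with i
  split_ifs
  · rfl
  · rw [one_mul]

theorem overpartitionGenFun_mul_of_iff_not {P Q : ℕ → Prop} [DecidablePred P] [DecidablePred Q]
    (h : ∀ i, P i ↔ ¬ Q i) :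
    overpartitionGenFun P * overpartitionGenFun Q = overpartitionGenFun (1 ∣ ·) := by
  refine ((hasProd_overpartitionGenFun P).mul (hasProd_overpartitionGenFun Q)).unique ?_
  convert! hasProd_overpartitionGenFun (1 ∣ ·) using 2 with i
  by_cases hQ : Q (i + 1) <;> simp [h, hQ]

theorem overpartitionGenFun_regular_mul (ℓ μ : ℕ) :
    overpartitionGenFun (fun i ↦ ¬ ℓ ∣ i ∧ ¬ μ ∣ i) *
        (overpartitionGenFun (ℓ ∣ ·) * overpartitionGenFun (μ ∣ ·)) =
      overpartitionGenFun (1 ∣ ·) * overpartitionGenFun (ℓ.lcm μ ∣ ·) := by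
  refine ((hasProd_overpartitionGenFun _).mul ((hasProd_overpartitionGenFun _).mul
    (hasProd_overpartitionGenFun _))).unique ?_
  convert! (hasProd_overpartitionGenFun (1 ∣ ·)).mul
    (hasProd_overpartitionGenFun (ℓ.lcm μ ∣ ·)) using 2 with i
  by_cases hℓ : ℓ ∣ i + 1 <;> by_cases hμ : μ ∣ i + 1 <;> simp [Nat.lcm_dvd_iff, hℓ, hμ]

lemma hasProd_overpartitionFactor_mul {k : ℕ} (hk : k ≠ 0) :
    HasProd (fun i ↦ overpartitionFactor (k * (i + 1))) (overpartitionGenFun (k ∣ ·)) := by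
  have hpred (i : ℕ) : k * (i + 1) - 1 + 1 = k * (i + 1) :=
    Nat.sub_add_cancel (Nat.mul_pos hk.pos i.succ_pos)
  have hinj : Function.Injective fun i ↦ k * (i + 1) - 1 := by
    intro i j (hij : k * (i + 1) - 1 = k * (j + 1) - 1)
    have h : k * (i + 1) = k * (j + 1) := by rw [← hpred i, ← hpred j, hij]
    exact Nat.succ_injective (mul_left_cancel₀ hk h)
  convert! (hinj.hasProd_iff ?_).mpr (hasProd_overpartitionGenFun (k ∣ ·)) using 2 with i
  · simp [hpred]
  · intro i hi
    refine if_neg ?_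
    rintro ⟨c, hc⟩
    obtain ⟨j, rfl⟩ : ∃ j, c = j + 1 := Nat.exists_eq_succ_of_ne_zero (by grind)
    exact hi ⟨j, by lia⟩

lemma tendsto_of_X_pow_dvd_sub {R : Type*} [Ring R] [TopologicalSpace R] {f : ℕ → R⟦X⟧} {a : R⟦X⟧}
    (h : ∀ n, X ^ (n + 1) ∣ f n - a) : Tendsto f atTop (𝓝 a) := by
  rw [tendsto_iff_coeff_tendsto]
  refine fun d ↦ tendsto_atTop_of_eventually_const (i₀ := d) fun n hn ↦ ?_
  rw [← sub_eq_zero, ← map_sub]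
  exact X_pow_dvd_iff.mp (h n) d (by lia)

lemma tendsto_two_mul_sum_sub_one_theta {k : ℕ} (hk : k ≠ 0) :
    Tendsto (fun n ↦ 2 * ∑ j ∈ Finset.range (n + 1), (-1) ^ j * ((X : ℤ⟦X⟧) ^ k) ^ j ^ 2 - 1) atTop
      (𝓝 (theta (-1) k)) := by
  have hsum : HasSum (fun j : ℕ ↦ 2 * ((-1) ^ j * ((X : ℤ⟦X⟧) ^ k) ^ j ^ 2))
      (theta (-1) k + 1) := by
    convert! (hasSum_theta (-1) hk).nat_add_neg using 2 with j
    · rw [zpow_neg, Int.units_inv_eq_self, zpow_natCast, Int.natAbs_neg, Int.natAbs_natCast,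
        ← two_mul, ← pow_mul, X_pow_eq]
      rcases Nat.even_or_odd j with hj | hj <;> simp [hj.neg_one_pow]
    · simp
  have htendsto := (hsum.tendsto_sum_nat.comp (tendsto_add_atTop_nat 1)).sub_const 1
  simpa only [Function.comp_def, ← Finset.mul_sum, add_sub_cancel_right] using htendsto

lemma X_pow_dvd_prod_overpartitionFactor_mul_sub_one {k : ℕ} (hk : k ≠ 0) (n : ℕ) :
    X ^ (n + 1) ∣ (∏ i ∈ Finset.range n, overpartitionFactor (k * (i + 1))) *
      (2 * ∑ j ∈ Finset.range (n + 1), (-1) ^ j * ((X : ℤ⟦X⟧) ^ k) ^ j ^ 2 - 1) - 1 := by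
  have hgeom (i : ℕ) :
      (∑' j : ℕ, (X : ℤ⟦X⟧) ^ (k * (i + 1) * j)) * (1 - (X ^ k) ^ (i + 1)) = 1 := by
    simpa only [pow_mul] using
      tsum_pow_mul_one_sub_of_constantCoeff_eq_zero (f := ((X : ℤ⟦X⟧) ^ k) ^ (i + 1)) (by simp [hk])
  have hprod_geom : (∏ i ∈ Finset.range n, ∑' j : ℕ, (X : ℤ⟦X⟧) ^ (k * (i + 1) * j)) *
      ∏ i ∈ Finset.range n, (1 - (X ^ k) ^ (i + 1)) = 1 := by
    rw [← Finset.prod_mul_distrib]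
    exact Finset.prod_eq_one fun i _ ↦ hgeom i
  have hprod_factor : ∏ i ∈ Finset.range n, overpartitionFactor (k * (i + 1)) =
      (∏ i ∈ Finset.range n, ∑' j : ℕ, (X : ℤ⟦X⟧) ^ (k * (i + 1) * j)) *
        ∏ i ∈ Finset.range n, (1 + (X ^ k) ^ (i + 1)) := by
    simp only [overpartitionFactor, Finset.prod_mul_distrib, ← pow_mul]
  calc
    X ^ (n + 1) ∣ (X ^ k) ^ (n + 1) := pow_dvd_pow_of_dvd (dvd_pow_self X hk) _
    _ ∣ _ := dvd_mul_of_dvd_right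
      (pow_dvd_prod_one_add_pow_mul_sum_sub_prod_one_sub_pow (X ^ k) n)
      (∏ i ∈ Finset.range n, ∑' j : ℕ, (X : ℤ⟦X⟧) ^ (k * (i + 1) * j))
    _ = _ := by rw [mul_sub, hprod_geom, hprod_factor, mul_assoc]

/-- Gauss's identity `φ(-q) = ∏ i ≥ 1, (1 - q ^ i) / (1 + q ^ i)`, at `q = X ^ k`. -/
theorem overpartitionGenFun_dvd_mul_theta {k : ℕ} (hk : k ≠ 0) :
    overpartitionGenFun (k ∣ ·) * theta (-1) k = 1 := by
  have htendsto := (hasProd_overpartitionFactor_mul hk).tendsto_prod_nat.mul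
    (tendsto_two_mul_sum_sub_one_theta hk)
  refine tendsto_nhds_unique htendsto (tendsto_of_X_pow_dvd_sub fun n ↦ ?_)
  exact X_pow_dvd_prod_overpartitionFactor_mul_sub_one hk n

lemma theta_neg_one_ne_zero {k : ℕ} (hk : k ≠ 0) : theta (-1) k ≠ 0 :=
  right_ne_zero_of_mul_eq_one (overpartitionGenFun_dvd_mul_theta hk)

theorem overpartitionGenFun_odd_mul_theta :
    overpartitionGenFun Odd * theta (-1) 1 = theta (-1) 2 := by
  have hmul := overpartitionGenFun_mul_of_iff_not (P := Odd) (Q := (2 ∣ ·)) fun i ↦ by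
    rw [← Nat.not_even_iff_odd, even_iff_two_dvd]
  calc
    overpartitionGenFun Odd * theta (-1) 1 =
        overpartitionGenFun Odd * overpartitionGenFun (2 ∣ ·) * theta (-1) 1 * theta (-1) 2 := by
      linear_combination (-overpartitionGenFun Odd * theta (-1) 1) *
        overpartitionGenFun_dvd_mul_theta two_ne_zero
    _ = theta (-1) 2 := by
      rw [hmul, overpartitionGenFun_dvd_mul_theta one_ne_zero, one_mul]

theorem overpartitionGenFun_regular_mul_theta {ℓ μ : ℕ} (hℓ : ℓ ≠ 0) (hμ : μ ≠ 0) :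
    overpartitionGenFun (fun i ↦ ¬ ℓ ∣ i ∧ ¬ μ ∣ i) * (theta (-1) 1 * theta (-1) (ℓ.lcm μ)) =
      theta (-1) ℓ * theta (-1) μ := by
  have hunit := overpartitionGenFun_dvd_mul_theta one_ne_zero
  have hℓ_unit := overpartitionGenFun_dvd_mul_theta hℓ
  have hμ_unit := overpartitionGenFun_dvd_mul_theta hμ
  have hlcm_unit := overpartitionGenFun_dvd_mul_theta (Nat.lcm_ne_zero hℓ hμ)
  have hmul := overpartitionGenFun_regular_mul ℓ μ
  refine mul_left_cancel₀ (mul_ne_zero (left_ne_zero_of_mul_eq_one hℓ_unit)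
    (left_ne_zero_of_mul_eq_one hμ_unit)) ?_
  calc
    _ = (overpartitionGenFun (fun i ↦ ¬ ℓ ∣ i ∧ ¬ μ ∣ i) *
          (overpartitionGenFun (ℓ ∣ ·) * overpartitionGenFun (μ ∣ ·))) *
          (theta (-1) 1 * theta (-1) (ℓ.lcm μ)) := by ring
    _ = (overpartitionGenFun (1 ∣ ·) * theta (-1) 1) *
          (overpartitionGenFun (ℓ.lcm μ ∣ ·) * theta (-1) (ℓ.lcm μ)) := by rw [hmul]; ring
    _ = (overpartitionGenFun (ℓ ∣ ·) * theta (-1) ℓ) *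
          (overpartitionGenFun (μ ∣ ·) * theta (-1) μ) := by
      rw [hunit, hlcm_unit, hℓ_unit, hμ_unit]
    _ = _ := by ring

end Overpartitions

section Dissection

open PowerSeries

theorem contract_two_overpartitionGenFun_regular_four_three :
    contract 2 (overpartitionGenFun fun i ↦ ¬ 4 ∣ i ∧ ¬ 3 ∣ i) = overpartitionGenFun Odd ^ 2 := by
  have hregular : overpartitionGenFun (fun i ↦ ¬ 4 ∣ i ∧ ¬ 3 ∣ i) *
      (theta (-1) 1 * theta (-1) 12) = theta (-1) 4 * theta (-1) 3 :=
    overpartitionGenFun_regular_mul_theta four_ne_zero three_ne_zero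
  have hmul : overpartitionGenFun (fun i ↦ ¬ 4 ∣ i ∧ ¬ 3 ∣ i) *
      expand 2 two_ne_zero (theta (-1) 1 ^ 2 * theta (-1) 6) =
        theta (-1) 3 * theta 1 1 * expand 2 two_ne_zero (theta (-1) 2) := by
    rw [map_mul, map_pow, expand_theta _ one_ne_zero, expand_theta _ two_ne_zero,
      expand_theta _ (by norm_num : 6 ≠ 0), ← theta_neg_one_mul_theta_one one_ne_zero]
    linear_combination theta 1 1 * hregular
  have hcontract := congrArg (contract 2) hmul
  rw [contract_mul_expand, contract_mul_expand, contract_two_theta_three_mul_theta_one] at hcontract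
  have hne : theta (-1) 1 ^ 2 * theta (-1) 6 ≠ 0 := mul_ne_zero
    (pow_ne_zero 2 (theta_neg_one_ne_zero one_ne_zero)) (theta_neg_one_ne_zero (by norm_num))
  refine mul_right_cancel₀ hne ?_
  rw [hcontract, ← overpartitionGenFun_odd_mul_theta]
  ring

lemma mk_Rbar (ℓ μ : ℕ) :
    PowerSeries.mk (fun n ↦ (Rbar ℓ μ n : ℤ)) =
      overpartitionGenFun fun i ↦ ¬ ℓ ∣ i ∧ ¬ μ ∣ i := by
  ext n
  rw [overpartitionGenFun, coeff_mul, coeff_mk, Rbar, Nat.cast_sum]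
  simp only [coeff_mk, Nat.cast_mul]
  rfl

lemma mk_overOdd : PowerSeries.mk (fun n ↦ (overOdd n : ℤ)) = overpartitionGenFun Odd := by
  ext n
  rw [overpartitionGenFun, coeff_mul, coeff_mk, overOdd, Nat.cast_sum]
  simp only [coeff_mk, Nat.cast_mul]
  rfl

lemma mk_ppo : PowerSeries.mk (fun n ↦ (ppo n : ℤ)) = overpartitionGenFun Odd ^ 2 := by
  ext n
  rw [← mk_overOdd, sq, coeff_mul, coeff_mk, ppo, Nat.cast_sum]
  simp only [coeff_mk, Nat.cast_mul]

end Dissection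

theorem Rbar_four_three_eq_ppo (n : ℕ) :
    Rbar 4 3 (2 * n) = ppo n := by
  have hgenFun := contract_two_overpartitionGenFun_regular_four_three
  rw [← mk_Rbar, ← mk_ppo] at hgenFun
  have hcoeff := congrArg (PowerSeries.coeff n) hgenFun
  rw [coeff_contract, PowerSeries.coeff_mk, PowerSeries.coeff_mk] at hcoeff
  exact_mod_cast hcoeff
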